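/- arXiv:2303.18104 — 2 statements merged into one kernel-verified Lean document; each statement's English description precedes it below -/
import Mathlib

section
/- Let B ≥ 1 and λ ∈ ℝ with 0 < λ ≤ 1, and let Λ be the (B+1)×(B+1) matrix defined in the context. Then the powers of Λ converge entrywise to the matrix whose last row consists of all ones and whose other entries are all zero: for all l ∈ {0,…,B}, lim_{m→∞} (Λ^m)_{j,l} = 0 for every j < B, and lim_{m→∞} (Λ^m)_{B,l} = 1. -/
open Matrix Filter

/-- The `(B+1) × (B+1)` transition matrix `Λ`: diagonal entries `1 - λ` (except the
last one, which is `1`), subdiagonal entries `λ`, all other entries `0`. -/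
def Lam (B : ℕ) (lam : ℝ) : Matrix (Fin (B+1)) (Fin (B+1)) ℝ :=
  Matrix.of fun j l =>
    if (j : ℕ) = (l : ℕ) then (if (j : ℕ) < B then 1 - lam else 1)
    else if (j : ℕ) = (l : ℕ) + 1 then lam
    else 0

theorem Lam_colsum (B : ℕ) (lam : ℝ) (l : Fin (B+1)) : ∑ j, Lam B lam j l = 1 := by
  by_cases hl : (l : ℕ) < B
  · rw [Finset.sum_eq_add l (⟨l + 1, by omega⟩ : Fin (B+1))]
    · simp [Lam, hl]
    · intro h
      have := congrArg Fin.val h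
      simp at this
    · intro c _ hc
      have h1 : (c : ℕ) ≠ l := fun h => hc.1 (Fin.ext h)
      have h2 : (c : ℕ) ≠ l + 1 := fun h => hc.2 (Fin.ext h)
      simp [Lam, h1, h2]
    · simp
    · simp
  · rw [Finset.sum_eq_single l]
    · simp [Lam, hl]
    · intro c _ hc
      have h1 : (c : ℕ) ≠ l := fun h => hc (Fin.ext h)
      have h2 : (c : ℕ) ≠ l + 1 := by omega
      simp [Lam, h1, h2]
    · simp

theorem Lam_pow_colsum (B : ℕ) (lam : ℝ) (l : Fin (B+1)) (m : ℕ) :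
    ∑ j, (Lam B lam ^ m) j l = 1 := by
  induction m with
  | zero => simp [Matrix.one_apply]
  | succ m ih =>
    simp only [pow_succ', Matrix.mul_apply]
    rw [Finset.sum_comm]
    simp only [← Finset.sum_mul, Lam_colsum, one_mul, ih]

theorem Lam_pow_bound (B : ℕ) (lam : ℝ) (h0 : 0 < lam) (h1 : lam ≤ 1)
    (l : Fin (B+1)) (m : ℕ) : ∀ j : Fin (B+1), (j : ℕ) < B →
    |(Lam B lam ^ m) j l| ≤ 2 ^ (j : ℕ) * (1 - lam / 2) ^ m := by
  induction m with
  | zero =>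
    intro j _
    have : (1 : ℝ) ≤ 2 ^ (j : ℕ) := one_le_pow₀ (by norm_num)
    simp only [pow_zero, Matrix.one_apply, mul_one]
    split_ifs <;> simp <;> linarith
  | succ m ih =>
    intro j hj
    have hl : 0 ≤ 1 - lam := by linarith
    rw [pow_succ', Matrix.mul_apply]
    have ihj := mul_le_mul_of_nonneg_left (ih j hj) hl
    by_cases hz : (j : ℕ) = 0
    · rw [Finset.sum_eq_single j]
      · have e : Lam B lam j j = 1 - lam := by simp [Lam, hj]
        rw [e, abs_mul, abs_of_nonneg hl]
        refine ihj.trans ?_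
        have : 0 ≤ 2 ^ (j : ℕ) * (1 - lam / 2) ^ m :=
          mul_nonneg (by positivity) (pow_nonneg (by linarith) _)
        rw [pow_succ]
        nlinarith
      · intro c _ hc
        have h1 : (j : ℕ) ≠ c := fun h => hc (Fin.ext h.symm)
        have h2 : (j : ℕ) ≠ c + 1 := by omega
        simp [Lam, h1, h2]
      · simp
    · obtain ⟨k, hk⟩ := Nat.exists_eq_succ_of_ne_zero hz
      rw [Finset.sum_eq_add j (⟨k, by omega⟩ : Fin (B+1))]
      · have e : Lam B lam j j = 1 - lam := by simp [Lam, hj]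
        have e2 : Lam B lam j (⟨k, by omega⟩ : Fin (B+1)) = lam := by simp [Lam, hk]
        have ihk := mul_le_mul_of_nonneg_left (ih ⟨k, by omega⟩ (by simp; omega)) h0.le
        rw [e, e2]
        refine (abs_add_le _ _).trans ?_
        rw [abs_mul, abs_mul, abs_of_nonneg hl, abs_of_pos h0]
        refine (add_le_add ihj ihk).trans (le_of_eq ?_)
        simp only [hk, Nat.succ_eq_add_one]
        ring
      · intro h
        have := congrArg Fin.val h
        simp at this
        omega
      · intro c _ hc
        have h1 : (j : ℕ) ≠ c := fun h => hc.1 (Fin.ext h.symm)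
        have h2 : (j : ℕ) ≠ c + 1 := fun h => hc.2 (Fin.ext (by simp; omega))
        simp [Lam, h1, h2]
      · simp
      · simp

/-- For 0 < λ ≤ 1, the powers of Λ converge entrywise to the matrix with all-ones
last row and zeros elsewhere. -/
theorem Lam_pow_tendsto (B : ℕ) (hB : 1 ≤ B) (lam : ℝ)
    (h0 : 0 < lam) (h1 : lam ≤ 1) (l : Fin (B+1)) :
    (∀ j : Fin (B+1), (j : ℕ) < B →
      Filter.Tendsto (fun m : ℕ => (Lam B lam ^ m) j l) Filter.atTop (nhds 0)) ∧
    Filter.Tendsto (fun m : ℕ => (Lam B lam ^ m) (Fin.last B) l)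
      Filter.atTop (nhds 1) := by
  have hA : ∀ j : Fin (B+1), (j : ℕ) < B →
      Filter.Tendsto (fun m : ℕ => (Lam B lam ^ m) j l) Filter.atTop (nhds 0) := by
    intro j hj
    refine squeeze_zero_norm (fun m => Lam_pow_bound B lam h0 h1 l m j hj) ?_
    have := (tendsto_pow_atTop_nhds_zero_of_lt_one (r := 1 - lam / 2)
      (by linarith) (by linarith)).const_mul ((2 : ℝ) ^ (j : ℕ))
    simpa using this
  refine ⟨hA, ?_⟩
  have e : (fun m : ℕ => (Lam B lam ^ m) (Fin.last B) l) =
      fun m => 1 - ∑ i : Fin B, (Lam B lam ^ m) i.castSucc l := by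
    funext m
    have := Lam_pow_colsum B lam l m
    rw [Fin.sum_univ_castSucc] at this
    linarith
  rw [e]
  have := (tendsto_finsetSum (Finset.univ : Finset (Fin B))
    (fun i _ => hA i.castSucc (by simp))).const_sub 1
  simpa using this
end

section
/- Let B ≥ 1 and λ ∈ ℝ with 0 ≤ λ ≤ 1, and let Λ be the (B+1)×(B+1) matrix defined in the context. Then the convergence of Λ^m above the last row is geometric: for all indices j < B and l ∈ {0,…,B}, and every natural number m with m ≥ B and m ≥ 1, the entry satisfies 0 ≤ (Λ^m)_{j,l} ≤ m^B · (1−λ)^{m−B}. -/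
open Matrix Filter

theorem Lam_pow_entry (B : ℕ) (lam : ℝ) (l : Fin (B+1)) (m : ℕ) :
    ∀ j : Fin (B+1), (j : ℕ) < B → (Lam B lam ^ m) j l =
      if (l : ℕ) ≤ j then (m.choose (j - l) : ℝ) * lam ^ ((j : ℕ) - l) *
        (1 - lam) ^ (m - ((j : ℕ) - l)) else 0 := by
  induction m with
  | zero =>
    intro j hj
    rw [pow_zero, Matrix.one_apply]
    by_cases h : j = l
    · subst h; simp
    · have h' : (j : ℕ) ≠ l := fun e => h (Fin.ext e)
      rw [if_neg h]
      split_ifs with h2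
      · rw [Nat.choose_eq_zero_of_lt (by omega)]; simp
      · rfl
  | succ m ih =>
    intro j hj
    rw [pow_succ', Matrix.mul_apply]
    rcases Nat.eq_zero_or_pos (j : ℕ) with hj0 | hj0
    · rw [Finset.sum_eq_single j]
      · rw [ih j hj]
        simp only [Lam, Matrix.of_apply, if_true, if_pos hj]
        split_ifs with h
        · have : (j : ℕ) - l = 0 := by omega
          rw [this]; simp [pow_succ']
        · simp
      · intro b _ hb
        have : (j : ℕ) ≠ b := fun e => hb (Fin.ext e.symm)
        simp only [Lam, Matrix.of_apply]
        rw [if_neg this, if_neg (by omega), zero_mul]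
      · simp
    · obtain ⟨i, hi⟩ : ∃ i : Fin (B+1), (j : ℕ) = i + 1 :=
        ⟨⟨j - 1, by omega⟩, by simp; omega⟩
      have hji : j ≠ i := fun e => by rw [e] at hi; omega
      rw [Finset.sum_eq_add j i hji]
      · rw [ih j hj, ih i (by omega)]
        have e1 : Lam B lam j j = 1 - lam := by simp [Lam, hj]
        have e2 : Lam B lam j i = lam := by simp [Lam, hi]
        rw [e1, e2]
        by_cases h : (l : ℕ) ≤ i
        · rw [if_pos (by omega), if_pos h, if_pos (by omega)]
          obtain ⟨k, hk⟩ : ∃ k, (i : ℕ) - l = k := ⟨_, rfl⟩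
          have hk' : (j : ℕ) - l = k + 1 := by omega
          rw [hk, hk', Nat.choose_succ_succ, Nat.add_sub_add_right]
          push_cast
          by_cases hkm : k + 1 ≤ m
          · have : m - k = (m - (k+1)) + 1 := by omega
            rw [this]; ring
          · rw [Nat.choose_eq_zero_of_lt (show m < k + 1 by omega)]
            push_cast; ring
        · rw [if_neg h]
          by_cases h2 : (l : ℕ) ≤ j
          · rw [if_pos h2, if_pos h2]
            have : (j : ℕ) - l = 0 := by omega
            rw [this]; simp [pow_succ']
          · rw [if_neg h2, if_neg h2]; simp
      · intro b _ hb
        have h1 : (j : ℕ) ≠ b := fun e => hb.1 (Fin.ext e.symm)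
        have h2 : (j : ℕ) ≠ b + 1 := fun e => hb.2 (Fin.ext (by omega))
        simp only [Lam, Matrix.of_apply]
        rw [if_neg h1, if_neg h2, zero_mul]
      · simp
      · simp

/-- For 0 ≤ λ ≤ 1, the entries of Λ^m above the last row decay geometrically:
for j < B, any l, and m ≥ max(B, 1), we have 0 ≤ (Λ^m)_{j,l} ≤ m^B (1-λ)^(m-B). -/
theorem Lam_pow_geometric_bound (B : ℕ) (hB : 1 ≤ B) (lam : ℝ)
    (h0 : 0 ≤ lam) (h1 : lam ≤ 1) (j l : Fin (B+1)) (hjB : (j : ℕ) < B)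
    (m : ℕ) (hmB : B ≤ m) (hm1 : 1 ≤ m) :
    0 ≤ (Lam B lam ^ m) j l ∧
      (Lam B lam ^ m) j l ≤ (m : ℝ) ^ B * (1 - lam) ^ (m - B) := by
  have h1' : 0 ≤ 1 - lam := by linarith
  rw [Lam_pow_entry B lam l m j hjB]
  split_ifs with h
  · refine ⟨by positivity, ?_⟩
    have hk : (j : ℕ) - l ≤ B := by omega
    generalize (j : ℕ) - l = k at hk
    have a : ((m.choose k : ℕ) : ℝ) ≤ (m : ℝ) ^ B := by
      have : m.choose k ≤ m ^ B :=
        (Nat.choose_le_pow m k).trans (Nat.pow_le_pow_right hm1 hk)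
      exact_mod_cast this
    have b : lam ^ k ≤ 1 := pow_le_one₀ h0 h1
    have c : (1 - lam) ^ (m - k) ≤ (1 - lam) ^ (m - B) :=
      pow_le_pow_of_le_one h1' (by linarith) (by omega)
    have d : (m.choose k : ℝ) * lam ^ k ≤ (m : ℝ) ^ B :=
      (mul_le_of_le_one_right (by positivity) b).trans a
    exact mul_le_mul d c (by positivity) (by positivity)
  · exact ⟨le_rfl, by positivity⟩
end
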